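/- arXiv:2603.07734 — 2 statements merged into one kernel-verified Lean document; each statement's English description precedes it below -/
import Mathlib

section
/- Every nonempty open connected subset of ℝⁿ = EuclideanSpace ℝ (Fin n) is orthogonally connected. -/
noncomputable section

/-- A set `S ⊆ ℝⁿ` is *orthogonally connected* if any two of its points can be joined
by a polygonal path inside `S` all of whose segments are parallel to coordinate axes. -/
def OrthoConn {n : ℕ} (S : Set (EuclideanSpace ℝ (Fin n))) : Prop :=
  ∀ p ∈ S, ∀ q ∈ S, ∃ (k : ℕ) (x : ℕ → EuclideanSpace ℝ (Fin n)),
    x 0 = p ∧ x k = q ∧ ∀ j < k,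
      segment ℝ (x j) (x (j + 1)) ⊆ S ∧
      ∃ (i : Fin n) (c : ℝ), x (j + 1) - x j = c • EuclideanSpace.single i 1

def OrthoStep {n : ℕ} (S : Set (EuclideanSpace ℝ (Fin n)))
    (a b : EuclideanSpace ℝ (Fin n)) : Prop :=
  segment ℝ a b ⊆ S ∧ ∃ (i : Fin n) (c : ℝ), b - a = c • EuclideanSpace.single i 1

theorem OrthoStep.symm {n : ℕ} {S : Set (EuclideanSpace ℝ (Fin n))}
    {a b : EuclideanSpace ℝ (Fin n)} (h : OrthoStep S a b) : OrthoStep S b a := by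
  obtain ⟨h1, i, c, h2⟩ := h
  refine ⟨by rwa [segment_symm], i, -c, ?_⟩
  rw [neg_smul, ← h2, neg_sub]

theorem orthoStep_chain {n : ℕ} {S : Set (EuclideanSpace ℝ (Fin n))}
    {p q : EuclideanSpace ℝ (Fin n)} (h : Relation.ReflTransGen (OrthoStep S) p q) :
    ∃ (k : ℕ) (x : ℕ → EuclideanSpace ℝ (Fin n)),
      x 0 = p ∧ x k = q ∧ ∀ j < k, OrthoStep S (x j) (x (j + 1)) := by
  induction h with
  | refl => exact ⟨0, fun _ => p, rfl, rfl, by simp⟩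
  | @tail b c _ hbc ih =>
    obtain ⟨k, x, h0, hk, hx⟩ := ih
    refine ⟨k + 1, fun j => if j ≤ k then x j else c, by simpa using h0, by simp, ?_⟩
    intro j hj
    rcases Nat.lt_succ_iff_lt_or_eq.mp hj with h | rfl
    · have h' : j + 1 ≤ k := h
      simpa [h.le, h'] using hx j h
    · simpa [hk] using hbc

theorem orthoStep_local {n : ℕ} {S : Set (EuclideanSpace ℝ (Fin n))}
    {x y : EuclideanSpace ℝ (Fin n)} {r : ℝ} (hr : Metric.ball x r ⊆ S)
    (hy : y ∈ Metric.ball x r) : Relation.ReflTransGen (OrthoStep S) x y := by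
  have hmem : ∀ T : Finset (Fin n),
      WithLp.toLp 2 (fun i => if i ∈ T then y i else x i) ∈ Metric.ball x r := by
    intro T
    refine lt_of_le_of_lt ?_ (Metric.mem_ball.mp hy)
    rw [EuclideanSpace.dist_eq, EuclideanSpace.dist_eq]
    apply Real.sqrt_le_sqrt
    apply Finset.sum_le_sum
    intro i _
    by_cases hi : i ∈ T <;> simp [hi, sq_nonneg]
  have key : ∀ T : Finset (Fin n), Relation.ReflTransGen (OrthoStep S) x
      (WithLp.toLp 2 (fun i => if i ∈ T then y i else x i)) := by
    intro T
    induction T using Finset.induction_on with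
    | empty => simpa using Relation.ReflTransGen.refl
    | insert a T ha ih =>
      refine ih.tail ⟨((convex_ball x r).segment_subset (hmem T) (hmem _)).trans hr,
        a, y a - x a, ?_⟩
      ext i
      by_cases hi : i = a
      · subst hi; simp [ha]
      · simp [hi]
  simpa using key Finset.univ

/-- Lemma: any nonempty open connected subset of `ℝⁿ` is orthogonally connected. -/
theorem isOpen_isConnected_orthoConn {n : ℕ} (S : Set (EuclideanSpace ℝ (Fin n)))
    (hne : S.Nonempty) (hopen : IsOpen S) (hconn : IsConnected S) :
    OrthoConn S := by
  intro p hp q hq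
  apply orthoStep_chain
  refine hconn.isPreconnected.induction₂ (Relation.ReflTransGen (OrthoStep S))
    ?_ (fun _ _ _ _ _ _ h1 h2 => h1.trans h2) (fun _ _ _ _ h => ?_) hp hq
  · intro x hx
    obtain ⟨r, hr0, hr⟩ := Metric.isOpen_iff.mp hopen x hx
    filter_upwards [mem_nhdsWithin_of_mem_nhds (Metric.ball_mem_nhds x hr0)] with y hy
    exact orthoStep_local hr hy
  · haveI : Std.Symm (OrthoStep S) := ⟨fun _ _ h => OrthoStep.symm h⟩
    exact Relation.ReflTransGen.stdSymm.symm _ _ h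
end
end

section
/- Let M ⊆ ℝ² be the convex hull of a finite set of points, with nonempty interior (a convex polygon). Suppose that for every extreme point v of M there exists a point v' ∈ M with v' ≠ v such that the segment [v, v'] is parallel to one of the two coordinate axes. Then M is orthogonally connected. -/
noncomputable section

/-- One axis-parallel step inside `S`. -/
def OStep (S : Set (EuclideanSpace ℝ (Fin 2))) (x y : EuclideanSpace ℝ (Fin 2)) : Prop :=
  segment ℝ x y ⊆ S ∧ ∃ (i : Fin 2) (c : ℝ), y - x = c • EuclideanSpace.single i 1

lemma OStep.symm {S : Set (EuclideanSpace ℝ (Fin 2))} {x y : EuclideanSpace ℝ (Fin 2)}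
    (h : OStep S x y) : OStep S y x := by
  obtain ⟨h1, i, c, h2⟩ := h
  refine ⟨by rwa [segment_symm], i, -c, ?_⟩
  rw [neg_smul, ← h2, neg_sub]

lemma oreach_symm {S : Set (EuclideanSpace ℝ (Fin 2))} {x y : EuclideanSpace ℝ (Fin 2)}
    (h : Relation.ReflTransGen (OStep S) x y) : Relation.ReflTransGen (OStep S) y x := by
  induction h with
  | refl => exact .refl
  | tail _ h2 ih => exact .head h2.symm ih

/-- Moving off a relative interior point of a segment towards an interior point. -/
lemma exists_interior_move {S : Set (EuclideanSpace ℝ (Fin 2))} (hS : Convex ℝ S)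
    {a b p o : EuclideanSpace ℝ (Fin 2)} (ha : a ∈ S) (hb : b ∈ S)
    (hp : p ∈ openSegment ℝ a b) (ho : o ∈ interior S) (α β : ℝ) (hβ : 0 < β) :
    ∃ t : ℝ, p + t • (α • (b - a) + β • (o - p)) ∈ interior S := by
  obtain ⟨A, B, hA, hB, hAB, rfl⟩ := hp
  have c1 : ContinuousAt (fun t : ℝ => t * α / (1 - t * β)) 0 := by
    apply ContinuousAt.div (by fun_prop) (by fun_prop) (by simp)
  have c2 : ContinuousAt (fun t : ℝ => 1 - t * β) 0 := by fun_prop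
  have e1 : ∀ᶠ t in nhds (0:ℝ), t * α / (1 - t * β) < A :=
    c1.eventually_lt continuousAt_const (by simpa using hA)
  have e2 : ∀ᶠ t in nhds (0:ℝ), -B < t * α / (1 - t * β) :=
    continuousAt_const.eventually_lt c1 (by simpa using hB)
  have e3 : ∀ᶠ t in nhds (0:ℝ), 0 < 1 - t * β :=
    continuousAt_const.eventually_lt c2 (by simp)
  have e : ∀ᶠ t in nhdsWithin (0:ℝ) (Set.Ioi 0), _ :=
    ((e1.and (e2.and e3)).filter_mono nhdsWithin_le_nhds).and self_mem_nhdsWithin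
  obtain ⟨t, ⟨h1, h2, h3⟩, h4⟩ := e.exists
  have h4 : 0 < t := h4
  refine ⟨t, ?_⟩
  set r := t * α / (1 - t * β) with hr
  have hr' : (1 - t * β) * r = t * α := by rw [hr]; field_simp
  have hq : (A - r) • a + (B + r) • b ∈ S :=
    hS ha hb (by linarith) (by linarith) (by linarith)
  have := hS.combo_interior_self_mem_interior ho hq (mul_pos h4 hβ) h3.le (by ring)
  convert this using 1
  ext j
  simp
  linear_combination (a j - b j) * hr'

/-- A point on an open nondegenerate segment of `S` is joined to the interior. -/
lemma oreach_of_openSegment {S : Set (EuclideanSpace ℝ (Fin 2))} (hS : Convex ℝ S)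
    {a b p o : EuclideanSpace ℝ (Fin 2)} (ha : a ∈ S) (hb : b ∈ S) (hab : a ≠ b)
    (hp : p ∈ openSegment ℝ a b) (ho : o ∈ interior S) :
    ∃ q ∈ interior S, OStep S p q := by
  have hpS : p ∈ S := hS.openSegment_subset ha hb hp
  by_cases h0 : b 0 - a 0 = 0
  · have h1 : b 1 - a 1 ≠ 0 := by
      intro h1
      apply hab
      ext j
      fin_cases j
      · simp; linarith
      · simp; linarith
    obtain ⟨t, ht⟩ := exists_interior_move hS ha hb hp ho
      (-(o 1 - p 1) * (b 1 - a 1)) ((b 1 - a 1) ^ 2) (by positivity)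
    refine ⟨_, ht, hS.segment_subset hpS (interior_subset ht), 0,
      t * ((b 1 - a 1) ^ 2 * (o 0 - p 0) - (o 1 - p 1) * (b 1 - a 1) * (b 0 - a 0)), ?_⟩
    ext j
    fin_cases j
    · simp; ring
    · simp; ring
  · obtain ⟨t, ht⟩ := exists_interior_move hS ha hb hp ho
      (-(o 0 - p 0) * (b 0 - a 0)) ((b 0 - a 0) ^ 2) (by positivity)
    refine ⟨_, ht, hS.segment_subset hpS (interior_subset ht), 1,
      t * ((b 0 - a 0) ^ 2 * (o 1 - p 1) - (o 0 - p 0) * (b 0 - a 0) * (b 1 - a 1)), ?_⟩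
    ext j
    fin_cases j
    · simp; ring
    · simp; ring

lemma oreach_interior {S : Set (EuclideanSpace ℝ (Fin 2))} (hS : Convex ℝ S)
    {x y : EuclideanSpace ℝ (Fin 2)} (hx : x ∈ interior S) (hy : y ∈ interior S) :
    Relation.ReflTransGen (OStep S) x y := by
  refine hS.interior.isPreconnected.induction₂ (Relation.ReflTransGen (OStep S)) ?_
    (fun _ _ _ _ _ _ h1 h2 => h1.trans h2) (fun _ _ _ _ h => oreach_symm h) hx hy
  intro x hx
  have hc : Continuous (fun y : EuclideanSpace ℝ (Fin 2) =>
      x + (y 0 - x 0) • (EuclideanSpace.single 0 1 : EuclideanSpace ℝ (Fin 2))) := by fun_prop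
  have h1 : ∀ᶠ y in nhds x,
      x + (y 0 - x 0) • (EuclideanSpace.single 0 1 : EuclideanSpace ℝ (Fin 2)) ∈ interior S := by
    apply hc.continuousAt.eventually_mem
    simpa using isOpen_interior.mem_nhds hx
  filter_upwards [h1.filter_mono nhdsWithin_le_nhds, self_mem_nhdsWithin] with y hz hy
  refine Relation.ReflTransGen.head (b := _)
    ⟨hS.segment_subset (interior_subset hx) (interior_subset hz), 0, y 0 - x 0, by simp⟩
    (Relation.ReflTransGen.single
      ⟨hS.segment_subset (interior_subset hz) (interior_subset hy), 1, y 1 - x 1, ?_⟩)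
  ext j
  fin_cases j <;> simp

/-- Lemma: a convex polygon admitting an axis-parallel segment at each extreme point is
orthogonally connected. -/
theorem convex_polygon_with_axis_segments_orthoConn
    (V : Finset (EuclideanSpace ℝ (Fin 2))) (M : Set (EuclideanSpace ℝ (Fin 2)))
    (hM : M = convexHull ℝ (V : Set (EuclideanSpace ℝ (Fin 2))))
    (hint : (interior M).Nonempty)
    (hax : ∀ v ∈ Set.extremePoints ℝ M, ∃ v' ∈ M, v' ≠ v ∧
      ∃ (i : Fin 2) (c : ℝ), v' - v = c • EuclideanSpace.single i 1) :
    OrthoConn M := by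
  have hS : Convex ℝ M := hM ▸ convex_convexHull ℝ _
  obtain ⟨o, ho⟩ := hint
  have key : ∀ p ∈ M, Relation.ReflTransGen (OStep M) p o := by
    intro p hp
    by_cases hext : p ∈ Set.extremePoints ℝ M
    · obtain ⟨v', hv', hne, i, c, hc⟩ := hax p hext
      have hm : midpoint ℝ p v' ∈ openSegment ℝ p v' :=
        ⟨1/2, 1/2, by norm_num, by norm_num, by norm_num, by
          rw [midpoint_eq_smul_add]; simp⟩
      obtain ⟨q, hq, hs⟩ := oreach_of_openSegment hS hp hv' hne.symm hm ho
      refine .head ⟨hS.segment_subset hp (hS.openSegment_subset hp hv' hm), i, c / 2, ?_⟩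
        (.head hs (oreach_interior hS hq ho))
      rw [midpoint_sub_left, hc, smul_smul]
      congr 1
      simp
      ring
    · have : ∃ a ∈ M, ∃ b ∈ M, p ∈ openSegment ℝ a b ∧ a ≠ p := by
        by_contra! hcon
        exact hext ⟨hp, fun a ha b hb h => hcon a ha b hb h⟩
      obtain ⟨a, ha, b, hb, hpo, hne⟩ := this
      have hab : a ≠ b := by
        rintro rfl
        simp at hpo
        exact hne hpo.symm
      obtain ⟨q, hq, hs⟩ := oreach_of_openSegment hS ha hb hab hpo ho
      exact .head hs (oreach_interior hS hq ho)
  intro p hp q hq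
  have h := (key p hp).trans (oreach_symm (key q hq))
  clear hp
  induction h using Relation.ReflTransGen.head_induction_on with
  | refl => exact ⟨0, fun _ => q, rfl, rfl, by simp⟩
  | head h1 _ ih =>
    rename_i a c _
    obtain ⟨k, x, h0, hk, hx⟩ := ih
    refine ⟨k + 1, fun n => Nat.casesOn n a x, rfl, hk, ?_⟩
    intro j hj
    cases j with
    | zero => subst h0; exact h1
    | succ j => exact hx j (by omega)
end
end
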